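/- Let σ_uni(i, n−i) = |T_i|·|T_{n−i}|/|T_n| (the leaf-centric source inducing the uniform distribution on T_n), which for suitable δ > 1, γ ∈ (0,1/2), N satisfies ∑_{γn ≤ k ≤ (1−γ)n} σ_uni(k,n−k) ≥ (1−2γ)/(δ√(πγn)) for n ≥ N. Then E(H_{n,σ_uni}) ∈ O(√n · (log n)²). -/

import Mathlib

inductive BTree
  | leaf : BTree
  | node : BTree → BTree → BTree
deriving DecidableEq

def BTree.size : BTree → ℕ
  | .leaf => 1
  | .node l r => l.size + r.size

def BTree.height : BTree → ℕ
  | .leaf => 0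
  | .node l r => 1 + max l.height r.height

noncomputable def Pσ (σ : ℕ → ℕ → ℝ) : BTree → ℝ
  | .leaf => 1
  | .node l r => σ l.size r.size * Pσ σ l * Pσ σ r

def trees : ℕ → Finset BTree
  | 0 => ∅
  | 1 => {BTree.leaf}
  | (n+2) => (Finset.Ico 1 (n+2)).attach.biUnion
      (fun k => ((trees k.1) ×ˢ (trees (n+2-k.1))).image (fun p => BTree.node p.1 p.2))
  decreasing_by
  · exact (Finset.mem_Ico.mp k.2).2
  · have h := (Finset.mem_Ico.mp k.2).1; omega

noncomputable def expPow (σ : ℕ → ℕ → ℝ) (φ : ℝ) (n : ℕ) : ℝ :=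
  ∑ t ∈ trees n, Pσ σ t * φ ^ t.height

noncomputable def expH (σ : ℕ → ℕ → ℝ) (n : ℕ) : ℝ :=
  ∑ t ∈ trees n, Pσ σ t * (t.height : ℝ)

open Filter Asymptotics Real

/-- The leaf-centric source inducing the uniform distribution on binary trees:
σ_uni(i, j) = |T_i|·|T_j| / |T_{i+j}|. -/
noncomputable def σuni (i j : ℕ) : ℝ :=
  ((trees i).card * (trees j).card : ℝ) / ((trees (i + j)).card : ℝ)

/-!
Let `0 ≤ z`, `0 ≤ u` and `z + u² ≤ u`. Splitting a tree at its root shows by induction that the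
trees of height at least `d` have total weight `∑ z ^ size ≤ u (2u) ^ d`: a tree of height at least
`d + 1` has a subtree of height at least `d` at its root, on one of the two sides. Taking
`z = (1 - ε²) / 4` and `u = (1 - ε) / 2` with `n ε² ≤ 1 / 2`, at most `4 ^ n exp (-ε d)` trees with
`n` leaves have height at least `d`. As `|T_n|` is of order `4 ^ n / n ^ (3 / 2)`, the choice
`ε = 1 / (2 √n)` and `d ≈ 6 √n log n` makes the trees of height at least `d` negligible, so the
mean height is even `O(√n log n)`. The weak balance of the source only needs the order of `|T_n|`,
which gives `σuni k (n - k) ≥ 1 / (2 n ^ (3 / 2))` uniformly in `k`.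
-/

open Finset

/-! ### Counting trees by their number of leaves -/

namespace BTree

lemma size_pos (t : BTree) : 0 < t.size := by
  induction t with
  | leaf => exact one_pos
  | node l r hl _ => exact Nat.add_pos_left hl _

lemma height_lt_size (t : BTree) : t.height < t.size := by
  induction t with
  | leaf => exact one_pos
  | node l r hl hr =>
    simp only [height, size]
    omega

/-- The tree of inner nodes of a full binary tree. -/
def toBinaryTree : BTree → BinaryTree Unit
  | leaf => .nil
  | node l r => .node () l.toBinaryTree r.toBinaryTree

/-- The full binary tree with a given tree of inner nodes, the inverse of `BTree.toBinaryTree`. -/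
def ofBinaryTree : BinaryTree Unit → BTree
  | .nil => leaf
  | .node _ l r => node (ofBinaryTree l) (ofBinaryTree r)

/-- Full binary trees correspond to Mathlib's unlabelled binary trees, in which the leaves are
left implicit. -/
def equivBinaryTree : BTree ≃ BinaryTree Unit where
  toFun := toBinaryTree
  invFun := ofBinaryTree
  left_inv t := by
    induction t with
    | leaf => rfl
    | node l r hl hr => exact congrArg₂ node hl hr
  right_inv t := by
    induction t with
    | nil => rfl
    | node _ l r hl hr => exact congrArg₂ (BinaryTree.node ()) hl hr

lemma numNodes_equivBinaryTree_add_one (t : BTree) : (equivBinaryTree t).numNodes + 1 = t.size := by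
  induction t with
  | leaf => rfl
  | node l r hl hr =>
    rw [size, ← hl, ← hr]
    change (equivBinaryTree l).numNodes + (equivBinaryTree r).numNodes + 1 + 1 = _
    omega

end BTree

lemma mem_trees {n : ℕ} {t : BTree} : t ∈ trees n ↔ t.size = n := by
  induction t generalizing n with
  | leaf =>
    match n with
    | 0 | 1 | n + 2 => simp [trees, BTree.size]
  | node l r hl hr =>
    have hlpos := l.size_pos
    have hrpos := r.size_pos
    match n with
    | 0 | 1 =>
      simp only [trees, BTree.size, notMem_empty, mem_singleton, reduceCtorEq, false_iff]
      omega
    | n + 2 =>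
      simp only [trees, mem_biUnion, mem_attach, true_and, mem_image, mem_product, Prod.exists,
        Subtype.exists, mem_Ico, BTree.size, BTree.node.injEq]
      constructor
      · rintro ⟨k, hk, _, _, ⟨ha, hb⟩, rfl, rfl⟩
        have := hl.mp ha
        have := hr.mp hb
        omega
      · intro h
        exact ⟨l.size, by omega, l, r, ⟨hl.mpr rfl, hr.mpr (by omega)⟩, rfl, rfl⟩

lemma card_trees_succ (n : ℕ) : #(trees (n + 1)) = catalan n := by
  rw [← BinaryTree.treesOfNumNodesEq_card_eq_catalan]
  refine card_equiv BTree.equivBinaryTree fun t => ?_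
  rw [mem_trees, BinaryTree.mem_treesOfNumNodesEq, ← t.numNodes_equivBinaryTree_add_one,
    Nat.add_right_cancel_iff]

/-! ### The order of magnitude of the number of trees -/

lemma add_one_sq_mul_centralBinom_succ_sq (n : ℕ) :
    (n + 1) ^ 2 * (n + 1).centralBinom ^ 2 = 4 * (2 * n + 1) ^ 2 * n.centralBinom ^ 2 := by
  rw [← mul_pow, Nat.succ_mul_centralBinom_succ]
  ring

lemma sixteen_pow_le_mul_centralBinom_sq (n : ℕ) :
    16 ^ n ≤ (4 * n + 1) * n.centralBinom ^ 2 := by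
  induction n with
  | zero => simp
  | succ n ih =>
    refine Nat.le_of_mul_le_mul_left ?_ (show 0 < (n + 1) ^ 2 by positivity)
    calc (n + 1) ^ 2 * 16 ^ (n + 1) = 16 * (n + 1) ^ 2 * 16 ^ n := by ring
      _ ≤ 16 * (n + 1) ^ 2 * ((4 * n + 1) * n.centralBinom ^ 2) := by gcongr
      _ = 16 * (n + 1) ^ 2 * (4 * n + 1) * n.centralBinom ^ 2 := by ring
      _ ≤ (4 * (n + 1) + 1) * (4 * (2 * n + 1) ^ 2) * n.centralBinom ^ 2 := by
        gcongr ?_ * _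
        linarith
      _ = (4 * (n + 1) + 1) * ((n + 1) ^ 2 * (n + 1).centralBinom ^ 2) := by
        rw [add_one_sq_mul_centralBinom_succ_sq]
        ring
      _ = (n + 1) ^ 2 * ((4 * (n + 1) + 1) * (n + 1).centralBinom ^ 2) := by ring

lemma mul_centralBinom_sq_le_sixteen_pow (n : ℕ) :
    (2 * n + 1) * n.centralBinom ^ 2 ≤ 16 ^ n := by
  induction n with
  | zero => simp
  | succ n ih =>
    refine Nat.le_of_mul_le_mul_left ?_ (show 0 < (n + 1) ^ 2 by positivity)
    calc (n + 1) ^ 2 * ((2 * (n + 1) + 1) * (n + 1).centralBinom ^ 2)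
        = (2 * (n + 1) + 1) * ((n + 1) ^ 2 * (n + 1).centralBinom ^ 2) := by ring
      _ = 4 * ((2 * n + 3) * (2 * n + 1)) * ((2 * n + 1) * n.centralBinom ^ 2) := by
        rw [add_one_sq_mul_centralBinom_succ_sq]
        ring
      _ ≤ 4 * (4 * (n + 1) ^ 2) * 16 ^ n := by
        gcongr ?_ * ?_
        linarith
      _ = (n + 1) ^ 2 * 16 ^ (n + 1) := by ring

lemma sixteen_pow_le_card_trees_sq {n : ℕ} (hn : 0 < n) :
    16 ^ n ≤ 64 * n ^ 3 * #(trees n) ^ 2 := by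
  obtain ⟨m, rfl⟩ : ∃ m, n = m + 1 := ⟨n - 1, by omega⟩
  rw [card_trees_succ]
  calc 16 ^ (m + 1) = 16 * 16 ^ m := pow_succ' _ _
    _ ≤ 16 * ((4 * m + 1) * m.centralBinom ^ 2) := by
      gcongr
      exact sixteen_pow_le_mul_centralBinom_sq m
    _ ≤ 16 * ((4 * (m + 1)) * m.centralBinom ^ 2) := by gcongr; omega
    _ = 64 * (m + 1) ^ 3 * catalan m ^ 2 := by
      rw [← succ_mul_catalan_eq_centralBinom]
      ring

lemma card_trees_sq_le_sixteen_pow (n : ℕ) : 16 * n ^ 3 * #(trees n) ^ 2 ≤ 16 ^ n := by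
  obtain _ | m := n
  · simp
  rw [card_trees_succ]
  calc 16 * (m + 1) ^ 3 * catalan m ^ 2 = 16 * ((m + 1) * m.centralBinom ^ 2) := by
        rw [← succ_mul_catalan_eq_centralBinom]
        ring
    _ ≤ 16 * ((2 * m + 1) * m.centralBinom ^ 2) := by gcongr; omega
    _ ≤ 16 * 16 ^ m := by
      gcongr
      exact mul_centralBinom_sq_le_sixteen_pow m
    _ = 16 ^ (m + 1) := (pow_succ' _ _).symm

lemma mul_sqrt_sq {x : ℝ} (hx : 0 ≤ x) : (x * √x) ^ 2 = x ^ 3 := by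
  rw [mul_pow, sq_sqrt hx, ← pow_succ]

lemma four_pow_sq (n : ℕ) : ((4 : ℝ) ^ n) ^ 2 = 16 ^ n := by
  rw [pow_right_comm]
  norm_num

lemma four_pow_le_card_trees {n : ℕ} (hn : 0 < n) :
    (4 : ℝ) ^ n ≤ 8 * (n * √n) * #(trees n) := by
  refine le_of_sq_le_sq ?_ (by positivity)
  calc ((4 : ℝ) ^ n) ^ 2 = 16 ^ n := four_pow_sq n
    _ ≤ 64 * n ^ 3 * #(trees n) ^ 2 := by exact_mod_cast sixteen_pow_le_card_trees_sq hn
    _ = (8 * (n * √n) * #(trees n)) ^ 2 := by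
      rw [mul_pow, mul_pow, mul_sqrt_sq n.cast_nonneg]
      norm_num

lemma card_trees_le_four_pow (n : ℕ) : 4 * (n * √n) * #(trees n) ≤ (4 : ℝ) ^ n := by
  refine le_of_sq_le_sq ?_ (by positivity)
  calc (4 * (n * √n) * #(trees n)) ^ 2 = 16 * (n : ℝ) ^ 3 * #(trees n) ^ 2 := by
        rw [mul_pow, mul_pow, mul_sqrt_sq n.cast_nonneg]
        norm_num
    _ ≤ 16 ^ n := by exact_mod_cast card_trees_sq_le_sixteen_pow n
    _ = ((4 : ℝ) ^ n) ^ 2 := (four_pow_sq n).symm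

lemma card_trees_pos {n : ℕ} (hn : 0 < n) : 0 < #(trees n) := by
  by_contra! h
  have := sixteen_pow_le_card_trees_sq hn
  simp_all

/-! ### The uniform source -/

lemma Pσ_σuni (t : BTree) : Pσ σuni t = (#(trees t.size) : ℝ)⁻¹ := by
  induction t with
  | leaf => simp [Pσ, BTree.size, trees]
  | node l r hl hr =>
    have := card_trees_pos l.size_pos
    have := card_trees_pos r.size_pos
    rw [Pσ, hl, hr, BTree.size, σuni]
    field_simp

lemma expH_σuni (n : ℕ) : expH σuni n = (∑ t ∈ trees n, (t.height : ℝ)) / #(trees n) := by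
  rw [expH, sum_div]
  refine sum_congr rfl fun t ht => ?_
  rw [Pσ_σuni, mem_trees.mp ht, inv_mul_eq_div]

lemma le_σuni {i j : ℕ} (hi : 0 < i) (hj : 0 < j) :
    (i + j) * √(i + j) / (16 * ((i * √i) * (j * √j))) ≤ σuni i j := by
  have hcard := card_trees_pos (Nat.add_pos_left hi j)
  have hupper := card_trees_le_four_pow (i + j)
  push_cast at hupper
  rw [σuni, div_le_div_iff₀ (by positivity) (by positivity)]
  refine le_of_mul_le_mul_left ?_ (show (0 : ℝ) < 4 by norm_num)
  calc 4 * ((i + j) * √(i + j) * #(trees (i + j)))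
      = 4 * ((i + j) * √(i + j)) * #(trees (i + j)) := by ring
    _ ≤ 4 ^ i * 4 ^ j := hupper.trans_eq (pow_add _ _ _)
    _ ≤ (8 * (i * √i) * #(trees i)) * (8 * (j * √j) * #(trees j)) := by
      gcongr
      exacts [four_pow_le_card_trees hi, four_pow_le_card_trees hj]
    _ = 4 * (#(trees i) * #(trees j) * (16 * ((i * √i) * (j * √j)))) := by ring

lemma eight_mul_mul_sqrt_mul_le {x y : ℝ} (hx : 0 ≤ x) (hy : 0 ≤ y) :
    8 * ((x * √x) * (y * √y)) ≤ (x + y) ^ 3 := by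
  refine le_of_sq_le_sq ?_ (by positivity)
  calc (8 * ((x * √x) * (y * √y))) ^ 2 = (4 * x * y) ^ 3 := by
        rw [mul_pow, mul_pow, mul_sqrt_sq hx, mul_sqrt_sq hy]
        ring
    _ ≤ ((x + y) ^ 2) ^ 3 := by
      gcongr
      exact four_mul_le_sq_add x y
    _ = ((x + y) ^ 3) ^ 2 := pow_right_comm _ _ _

lemma inv_two_mul_mul_sqrt_le_σuni {i j : ℕ} (hi : 0 < i) (hj : 0 < j) :
    (2 * ((i + j) * √(i + j)))⁻¹ ≤ σuni i j := by
  refine le_trans ?_ (le_σuni hi hj)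
  rw [inv_eq_one_div, div_le_div_iff₀ (by positivity) (by positivity)]
  calc 1 * (16 * ((i * √i) * (j * √j))) = 2 * (8 * ((i * √i) * (j * √j))) := by ring
    _ ≤ 2 * (i + j : ℝ) ^ 3 := by
      gcongr
      exact eight_mul_mul_sqrt_mul_le i.cast_nonneg j.cast_nonneg
    _ = (i + j) * √(i + j) * (2 * ((i + j) * √(i + j))) := by
      rw [← mul_sqrt_sq (by positivity)]
      ring

lemma sub_sub_one_le_card_Icc_ceil_floor {a : ℝ} (ha : 0 ≤ a) (b : ℝ) :
    b - a - 1 ≤ #(Icc ⌈a⌉₊ ⌊b⌋₊) := by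
  have hceil := Nat.ceil_lt_add_one ha
  have hfloor := Nat.lt_floor_add_one b
  have hcard : ((⌊b⌋₊ + 1 : ℕ) : ℝ) ≤ (⌊b⌋₊ + 1 - ⌈a⌉₊ : ℕ) + ⌈a⌉₊ := by
    exact_mod_cast le_tsub_add
  rw [Nat.card_Icc]
  push_cast at hcard
  linarith

/-- The left subtree sizes `k` for which both subtrees of a tree with `n` leaves have at least
`γ * n` leaves. -/
noncomputable def balancedSplits (γ : ℝ) (n : ℕ) : Finset ℕ :=
  {k ∈ Ico 1 n | γ * (n : ℝ) ≤ (k : ℝ) ∧ (k : ℝ) ≤ (1 - γ) * (n : ℝ)}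

/-- The source `σ` is `φ`-weakly-balanced with parameter `γ`: for all large `n`, the root of a
random tree with `n` leaves splits them in a `γ`-balanced way with probability at least `φ n`. -/
def IsWeaklyBalanced (σ : ℕ → ℕ → ℝ) (φ : ℕ → ℝ) (γ : ℝ) : Prop :=
  ∃ N : ℕ, ∀ n : ℕ, N ≤ n → φ n ≤ ∑ k ∈ balancedSplits γ n, σ k (n - k)

lemma le_card_balancedSplits {γ : ℝ} (hγ : 0 < γ) {n : ℕ} (hn : 0 < n) :
    (1 - 2 * γ) * n - 1 ≤ #(balancedSplits γ n) := by
  have hn' : (0 : ℝ) < n := by exact_mod_cast hn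
  have hsub : Icc ⌈γ * n⌉₊ ⌊(1 - γ) * n⌋₊ ⊆ balancedSplits γ n := by
    intro k hk
    obtain ⟨hceil, hfloor⟩ := mem_Icc.mp hk
    have hk0 : 0 < k := (Nat.ceil_pos.mpr (mul_pos hγ hn')).trans_le hceil
    have hle : (k : ℝ) ≤ (1 - γ) * n := (Nat.le_floor_iff' hk0.ne').mp hfloor
    have hkn : (k : ℝ) < n := hle.trans_lt (by nlinarith)
    exact mem_filter.mpr ⟨mem_Ico.mpr ⟨hk0, by exact_mod_cast hkn⟩, Nat.ceil_le.mp hceil, hle⟩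
  calc (1 - 2 * γ) * n - 1 = (1 - γ) * n - γ * n - 1 := by ring
    _ ≤ #(Icc ⌈γ * n⌉₊ ⌊(1 - γ) * n⌋₊) :=
      sub_sub_one_le_card_Icc_ceil_floor (by positivity) _
    _ ≤ _ := by exact_mod_cast card_le_card hsub

lemma le_sum_balancedSplits_σuni {γ : ℝ} (hγ : 0 < γ) {n : ℕ} (hn : 0 < n) :
    ((1 - 2 * γ) * n - 1) / (2 * (n * √n)) ≤ ∑ k ∈ balancedSplits γ n, σuni k (n - k) := by
  have hterm : ∀ k ∈ Ico 1 n, (2 * (n * √n))⁻¹ ≤ σuni k (n - k) := by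
    intro k hk
    obtain ⟨hk, hkn⟩ := mem_Ico.mp hk
    simpa only [Nat.cast_sub hkn.le, add_sub_cancel] using
      inv_two_mul_mul_sqrt_le_σuni hk (Nat.sub_pos_of_lt hkn)
  calc ((1 - 2 * γ) * n - 1) / (2 * (n * √n))
      ≤ #(balancedSplits γ n) * (2 * (n * √n))⁻¹ := by
        rw [div_eq_mul_inv]
        gcongr
        exact le_card_balancedSplits hγ hn
    _ ≤ _ := by
      rw [← nsmul_eq_mul]
      exact card_nsmul_le_sum _ _ _ fun k hk => hterm k (mem_filter.mp hk).1

lemma exists_isWeaklyBalanced_σuni {γ : ℝ} (hγ : 0 < γ) (hγ' : γ < 1 / 2) :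
    ∃ δ : ℝ, 1 < δ ∧
      IsWeaklyBalanced σuni (fun n => (1 - 2 * γ) / (δ * √(π * γ * n))) γ := by
  have hc : 0 < 1 - 2 * γ := by linarith
  have hsqrt : 0 < √(π * γ) := by positivity
  have hδ : 1 < 4 / √(π * γ) := by
    rw [one_lt_div hsqrt, sqrt_lt' (by norm_num)]
    nlinarith [pi_lt_four, pi_pos]
  refine ⟨4 / √(π * γ), hδ, ⌈2 / (1 - 2 * γ)⌉₊, fun n hn => ?_⟩
  have hlarge : 2 ≤ (1 - 2 * γ) * n := by
    rw [mul_comm, ← div_le_iff₀ hc]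
    exact Nat.ceil_le.mp hn
  have hn0 : (0 : ℝ) < n := pos_of_mul_pos_right (by linarith) hc.le
  refine le_trans ?_ (le_sum_balancedSplits_σuni hγ (by exact_mod_cast hn0))
  calc (1 - 2 * γ) / (4 / √(π * γ) * √(π * γ * n)) = (1 - 2 * γ) * n / 2 / (2 * (n * √n)) := by
        rw [sqrt_mul (mul_pos pi_pos hγ).le]
        field_simp
        norm_num
    _ ≤ ((1 - 2 * γ) * n - 1) / (2 * (n * √n)) := by
      gcongr
      linarith

/-! ### Generating polynomials and the tail of the height -/

/-- The generating polynomial of a finite family of trees counted by number of leaves, evaluated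
at `z`. -/
noncomputable def sizeGenPoly (A : Finset BTree) (z : ℝ) : ℝ :=
  ∑ t ∈ A, z ^ t.size

section sizeGenPoly

variable {A B : Finset BTree} {z : ℝ}

lemma sizeGenPoly_nonneg (hz : 0 ≤ z) : 0 ≤ sizeGenPoly A z :=
  sum_nonneg fun _ _ => pow_nonneg hz _

lemma sizeGenPoly_mono (hz : 0 ≤ z) (h : A ⊆ B) : sizeGenPoly A z ≤ sizeGenPoly B z :=
  sum_le_sum_of_subset_of_nonneg h fun _ _ _ => pow_nonneg hz _

lemma sizeGenPoly_union_le (hz : 0 ≤ z) :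
    sizeGenPoly (A ∪ B) z ≤ sizeGenPoly A z + sizeGenPoly B z :=
  (le_add_of_nonneg_right (sizeGenPoly_nonneg hz)).trans_eq sum_union_inter

lemma sizeGenPoly_image₂_node :
    sizeGenPoly (image₂ BTree.node A B) z = sizeGenPoly A z * sizeGenPoly B z := by
  have hinj : Function.Injective2 BTree.node := fun _ _ _ _ h => BTree.node.inj h
  rw [sizeGenPoly, ← image_uncurry_product, sum_image hinj.uncurry.injOn, sum_product, sizeGenPoly,
    sizeGenPoly, sum_mul_sum]
  simp only [Function.uncurry, BTree.size, pow_add]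

end sizeGenPoly

/-- The full binary trees with at most `N` leaves. -/
def treesUpTo (N : ℕ) : Finset BTree :=
  (range (N + 1)).biUnion trees

lemma mem_treesUpTo {N : ℕ} {t : BTree} : t ∈ treesUpTo N ↔ t.size ≤ N := by
  simp [treesUpTo, mem_trees]

lemma treesUpTo_succ_subset (N : ℕ) :
    treesUpTo (N + 1) ⊆ {BTree.leaf} ∪ image₂ BTree.node (treesUpTo N) (treesUpTo N) := by
  rintro (_ | ⟨l, r⟩) ht
  · exact mem_union_left _ (mem_singleton_self _)
  · have hl := l.size_pos
    have hr := r.size_pos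
    simp only [mem_treesUpTo, BTree.size] at ht
    exact mem_union_right _ <| mem_image₂_of_mem (mem_treesUpTo.mpr (by omega))
      (mem_treesUpTo.mpr (by omega))

lemma filter_succ_le_height_subset (N d : ℕ) :
    {t ∈ treesUpTo N | d + 1 ≤ t.height} ⊆
      image₂ BTree.node {t ∈ treesUpTo N | d ≤ t.height} (treesUpTo N) ∪
        image₂ BTree.node (treesUpTo N) {t ∈ treesUpTo N | d ≤ t.height} := by
  rintro (_ | ⟨l, r⟩) ht <;> simp only [mem_filter, mem_treesUpTo, BTree.size, BTree.height] at ht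
  · omega
  · have hl : l ∈ treesUpTo N := mem_treesUpTo.mpr (by omega)
    have hr : r ∈ treesUpTo N := mem_treesUpTo.mpr (by omega)
    rcases le_total r.height l.height with hrl | hlr
    · exact mem_union_left _ (mem_image₂_of_mem (mem_filter.mpr ⟨hl, by omega⟩) hr)
    · exact mem_union_right _ (mem_image₂_of_mem hl (mem_filter.mpr ⟨hr, by omega⟩))

lemma sizeGenPoly_treesUpTo_le {z u : ℝ} (hz : 0 ≤ z) (hu : 0 ≤ u) (h : z + u ^ 2 ≤ u) (N : ℕ) :
    sizeGenPoly (treesUpTo N) z ≤ u := by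
  induction N with
  | zero => simpa [treesUpTo, trees, sizeGenPoly] using hu
  | succ N ih =>
    have hnonneg : 0 ≤ sizeGenPoly (treesUpTo N) z := sizeGenPoly_nonneg hz
    calc sizeGenPoly (treesUpTo (N + 1)) z
        ≤ sizeGenPoly {BTree.leaf} z +
            sizeGenPoly (image₂ BTree.node (treesUpTo N) (treesUpTo N)) z :=
          (sizeGenPoly_mono hz (treesUpTo_succ_subset N)).trans (sizeGenPoly_union_le hz)
      _ = z + sizeGenPoly (treesUpTo N) z ^ 2 := by
        rw [sizeGenPoly_image₂_node, sizeGenPoly, sum_singleton, BTree.size, pow_one, sq]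
      _ ≤ z + u ^ 2 := by gcongr
      _ ≤ u := h

lemma sizeGenPoly_filter_le_height_le {z u : ℝ} (hz : 0 ≤ z) (hu : 0 ≤ u) (h : z + u ^ 2 ≤ u)
    (N d : ℕ) :
    sizeGenPoly {t ∈ treesUpTo N | d ≤ t.height} z ≤ u * (2 * u) ^ d := by
  induction d with
  | zero => simpa using sizeGenPoly_treesUpTo_le hz hu h N
  | succ d ih =>
    calc sizeGenPoly {t ∈ treesUpTo N | d + 1 ≤ t.height} z
        ≤ sizeGenPoly (image₂ BTree.node {t ∈ treesUpTo N | d ≤ t.height} (treesUpTo N)) z +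
            sizeGenPoly (image₂ BTree.node (treesUpTo N) {t ∈ treesUpTo N | d ≤ t.height}) z :=
          (sizeGenPoly_mono hz (filter_succ_le_height_subset N d)).trans (sizeGenPoly_union_le hz)
      _ = 2 * (sizeGenPoly {t ∈ treesUpTo N | d ≤ t.height} z * sizeGenPoly (treesUpTo N) z) := by
        rw [sizeGenPoly_image₂_node, sizeGenPoly_image₂_node]
        ring
      _ ≤ 2 * (u * (2 * u) ^ d * u) := by
        have := sizeGenPoly_nonneg (A := treesUpTo N) hz
        gcongr
        exact sizeGenPoly_treesUpTo_le hz hu h N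
      _ = u * (2 * u) ^ (d + 1) := by ring

lemma card_filter_le_height_mul_pow_le {z u : ℝ} (hz : 0 ≤ z) (hu : 0 ≤ u) (h : z + u ^ 2 ≤ u)
    (n d : ℕ) :
    #{t ∈ trees n | d ≤ t.height} * z ^ n ≤ u * (2 * u) ^ d := by
  have hsub : {t ∈ trees n | d ≤ t.height} ⊆ {t ∈ treesUpTo n | d ≤ t.height} :=
    filter_subset_filter _ fun t ht => mem_treesUpTo.mpr (mem_trees.mp ht).le
  calc (#{t ∈ trees n | d ≤ t.height} : ℝ) * z ^ n
      = sizeGenPoly {t ∈ trees n | d ≤ t.height} z := by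
        rw [sizeGenPoly, ← nsmul_eq_mul, ← sum_const]
        exact sum_congr rfl fun t ht => by rw [mem_trees.mp (mem_filter.mp ht).1]
    _ ≤ sizeGenPoly {t ∈ treesUpTo n | d ≤ t.height} z := sizeGenPoly_mono hz hsub
    _ ≤ u * (2 * u) ^ d := sizeGenPoly_filter_le_height_le hz hu h n d

lemma sum_le_card_mul_add_card_filter_mul {ι : Type*} {s : Finset ι} {f : ι → ℕ} {M : ℕ}
    (hM : ∀ i ∈ s, f i ≤ M) (d : ℕ) : ∑ i ∈ s, f i ≤ #s * d + #{i ∈ s | d ≤ f i} * M := by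
  calc ∑ i ∈ s, f i ≤ ∑ i ∈ s, (d + if d ≤ f i then M else 0) := by
        refine sum_le_sum fun i hi => ?_
        have := hM i hi
        split_ifs <;> omega
    _ = #s * d + #{i ∈ s | d ≤ f i} * M := by
      simp only [sum_add_distrib, ← sum_filter, sum_const, smul_eq_mul]

lemma card_filter_le_height_le {n : ℕ} {ε : ℝ} (hε : 0 ≤ ε) (hε' : ε ≤ 1)
    (hnε : n * ε ^ 2 ≤ 1 / 2) (d : ℕ) :
    #{t ∈ trees n | d ≤ t.height} ≤ 4 ^ n * exp (-(ε * d)) := by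
  have hsq : ε ^ 2 ≤ 1 := pow_le_one₀ hε hε'
  have hbernoulli : 1 / 2 ≤ (1 - ε ^ 2) ^ n := by
    have := one_add_mul_le_pow (a := -ε ^ 2) (by linarith) n
    rw [← sub_eq_add_neg] at this
    linarith
  have hexp : (1 - ε) ^ d ≤ exp (-(ε * d)) :=
    calc (1 - ε) ^ d ≤ exp (-ε) ^ d :=
          pow_le_pow_left₀ (by linarith) (one_sub_le_exp_neg ε) d
      _ = exp (-(ε * d)) := by
        rw [← exp_nat_mul]
        ring_nf
  have htail := card_filter_le_height_mul_pow_le (z := (1 - ε ^ 2) / 4) (u := (1 - ε) / 2)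
    (by linarith) (by linarith) (by linarith) n d
  rw [mul_div_cancel₀ _ two_ne_zero, div_pow] at htail
  calc (#{t ∈ trees n | d ≤ t.height} : ℝ)
      = 2 * 4 ^ n * (#{t ∈ trees n | d ≤ t.height} * ((1 / 2) / 4 ^ n)) := by field_simp
    _ ≤ 2 * 4 ^ n * (#{t ∈ trees n | d ≤ t.height} * ((1 - ε ^ 2) ^ n / 4 ^ n)) := by gcongr
    _ ≤ 2 * 4 ^ n * ((1 - ε) / 2 * (1 - ε) ^ d) := by gcongr
    _ ≤ 2 * 4 ^ n * (1 / 2 * exp (-(ε * d))) := by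
      gcongr
      linarith
    _ = 4 ^ n * exp (-(ε * d)) := by ring

lemma expH_σuni_le {n : ℕ} {ε : ℝ} (hε : 0 ≤ ε) (hε' : ε ≤ 1)
    (hnε : n * ε ^ 2 ≤ 1 / 2) (hn : 0 < n) (d : ℕ) :
    expH σuni n ≤ d + 8 * (n ^ 2 * √n) * exp (-(ε * d)) := by
  have hcard : (0 : ℝ) < #(trees n) := by exact_mod_cast card_trees_pos hn
  have hsum : ∑ t ∈ trees n, (t.height : ℝ) ≤
      #(trees n) * d + #{t ∈ trees n | d ≤ t.height} * n := by
    exact_mod_cast sum_le_card_mul_add_card_filter_mul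
      (fun t ht => (mem_trees.mp ht) ▸ t.height_lt_size.le) d
  rw [expH_σuni, div_le_iff₀ hcard]
  calc ∑ t ∈ trees n, (t.height : ℝ)
      ≤ #(trees n) * d + #{t ∈ trees n | d ≤ t.height} * n := hsum
    _ ≤ #(trees n) * d + 8 * (n * √n) * #(trees n) * exp (-(ε * d)) * n := by
      gcongr
      refine (card_filter_le_height_le hε hε' hnε d).trans ?_
      gcongr
      exact four_pow_le_card_trees hn
    _ = (d + 8 * (n ^ 2 * √n) * exp (-(ε * d))) * #(trees n) := by ring

lemma expH_σuni_le_sqrt_mul_log {n : ℕ} (hn : 0 < n) :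
    expH σuni n ≤ 6 * (√n * log n) + 9 := by
  have hn' : (1 : ℝ) ≤ n := by exact_mod_cast hn
  have hsqrt : 1 ≤ √(n : ℝ) := one_le_sqrt.mpr hn'
  have hsq : √(n : ℝ) ^ 2 = n := sq_sqrt n.cast_nonneg
  set d := ⌈6 * (√n * log n)⌉₊
  have hexp : exp (-((2 * √n)⁻¹ * d)) ≤ ((n : ℝ) ^ 3)⁻¹ := by
    have hd : log (n ^ 3) ≤ (2 * √n)⁻¹ * d := by
      rw [log_pow, inv_mul_eq_div, le_div_iff₀ (by positivity)]
      refine le_trans (le_of_eq ?_) (Nat.le_ceil _)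
      push_cast
      ring
    rw [exp_neg, ← exp_log (show (0 : ℝ) < n ^ 3 by positivity)]
    gcongr
  have hnε : n * ((2 * √n)⁻¹ : ℝ) ^ 2 ≤ 1 / 2 := by
    rw [inv_pow, mul_pow, hsq]
    field_simp
    norm_num
  calc expH σuni n ≤ d + 8 * (n ^ 2 * √n) * exp (-((2 * √n)⁻¹ * d)) :=
        expH_σuni_le (by positivity) (inv_le_one_of_one_le₀ (by linarith)) hnε hn d
    _ ≤ d + 8 * (n ^ 2 * n) * ((n : ℝ) ^ 3)⁻¹ := by
      gcongr
      exact sqrt_le_self_iff.mpr (.inr hn')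
    _ = d + 8 := by field_simp
    _ ≤ 6 * (√n * log n) + 9 := by
      linarith [Nat.ceil_lt_add_one (a := 6 * (√n * log n)) (by positivity)]

lemma expH_σuni_isBigO_sqrt_mul_log :
    (fun n : ℕ => expH σuni n) =O[atTop] fun n : ℕ => √n * log n := by
  refine IsBigO.of_bound 15 ?_
  filter_upwards [eventually_ge_atTop 3] with n hn
  have hn' : (3 : ℝ) ≤ n := by exact_mod_cast hn
  have hsqrt : 1 ≤ √(n : ℝ) := one_le_sqrt.mpr (by linarith)
  have hlog : 1 ≤ log n := by
    rw [le_log_iff_exp_le (by linarith)]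
    linarith [exp_one_lt_three]
  have hnonneg : 0 ≤ expH σuni n := by
    rw [expH_σuni]
    positivity
  rw [norm_of_nonneg hnonneg, norm_of_nonneg (by positivity)]
  linarith [expH_σuni_le_sqrt_mul_log (n := n) (by omega),
    one_le_mul_of_one_le_of_one_le hsqrt hlog]

lemma log_natCast_isBigO_log_sq :
    (fun n : ℕ => log n) =O[atTop] fun n : ℕ => log n ^ 2 := by
  have hone : (fun _ : ℕ => (1 : ℝ)) =O[atTop] fun n : ℕ => log n :=
    (isLittleO_const_log_atTop.comp_tendsto tendsto_natCast_atTop_atTop).isBigO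
  simpa only [one_mul, sq] using hone.mul (isBigO_refl (fun n : ℕ => log n) atTop)

theorem uniform_model_expected_height_general :
    (∀ γ : ℝ, 0 < γ → γ < 1 / 2 → ∃ δ : ℝ, 1 < δ ∧
      IsWeaklyBalanced σuni (fun n => (1 - 2 * γ) / (δ * √(π * γ * n))) γ) ∧
    (fun n : ℕ => expH σuni n) =O[atTop] fun n : ℕ => √n * log n :=
  ⟨fun _ hγ hγ' => exists_isWeaklyBalanced_σuni hγ hγ', expH_σuni_isBigO_sqrt_mul_log⟩

theorem uniform_model_expected_height :
    (∃ δ : ℝ, 1 < δ ∧ ∃ γ : ℝ, 0 < γ ∧ γ < 1 / 2 ∧ ∃ N : ℕ, ∀ n : ℕ, N ≤ n →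
      (1 - 2 * γ) / (δ * Real.sqrt (Real.pi * γ * n)) ≤
        ∑ k ∈ (Finset.Ico 1 n).filter
          (fun k : ℕ => γ * (n : ℝ) ≤ (k : ℝ) ∧ (k : ℝ) ≤ (1 - γ) * (n : ℝ)),
            σuni k (n - k)) ∧
    (fun n : ℕ => expH σuni n) =O[atTop]
      (fun n : ℕ => Real.sqrt n * (Real.log n) ^ 2) := by
  obtain ⟨hbalanced, hheight⟩ := uniform_model_expected_height_general
  obtain ⟨δ, hδ, hN⟩ := hbalanced (1 / 4) (by norm_num) (by norm_num)
  exact ⟨⟨δ, hδ, 1 / 4, by norm_num, by norm_num, hN⟩,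
    hheight.trans ((isBigO_refl _ _).mul log_natCast_isBigO_log_sq)⟩
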